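/- arXiv:1311.4066 — 2 statements merged into one kernel-verified Lean document; each statement's English description precedes it below -/
import Mathlib

section
/- Let i denote the imaginary unit. Define the 2×2 complex matrices C = [[−2^{3/4}/2, −i·2^{3/4}/2],[−i·2^{1/4}/2, −2^{1/4}/2]], D = [[2^{3/4}/2, −i·2^{3/4}/2],[−i·2^{1/4}/2, 2^{1/4}/2]], E = [[2^{3/4}/2, −i·2^{3/4}/2],[−i·2^{1/4}/2, 2^{1/4}/2]], F = [[−2^{3/4}/2, −i·2^{3/4}/2],[−i·2^{1/4}/2, −2^{1/4}/2]]. Then (C⊗D⊗E⊗F)(|0000⟩ + |1111⟩) = |0000⟩ + (1/2)|1100⟩ + (1/2)|1010⟩ − (1/2)|1001⟩ − (1/2)|0110⟩ + (1/2)|0101⟩ + (1/2)|0011⟩ + (1/4)|1111⟩; in particular the 4-arity EQUAL gate |0000⟩+|1111⟩ is Pfaffian under the heterogeneous change of basis (C,D,E,F), the right-hand side being sPf of the skew-symmetric matrix with upper-triangular entries Ξ₁₂ = 1/2, Ξ₁₃ = 1/2, Ξ₁₄ = −1/2, Ξ₂₃ = −1/2, Ξ₂₄ = 1/2, Ξ₃₄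 = 1/2. -/
/-! The image of `|0000⟩ + |1111⟩` has coordinate `∏ᵢ Aᵢ(bᵢ,0) + ∏ᵢ Aᵢ(bᵢ,1)` at `b`
(`cobGate_equal`). For `(C,D,E,F)` each product is a power of `i` times
`r34 ^ (4 - |b|) * r14 ^ |b| / 16`; the two products cancel when `|b|` is odd, and for even `|b|`
they agree and are evaluated by `r34 ^ 4 = 8`, `r34 * r14 = 2`, `r14 ^ 4 = 2`. On the Pfaffian side
`subPf` vanishes on odd sets (`subPf_odd`), equals `Ξ i j` on a pair `i < j` (`subPf_pair`), and on
the full set of four indices is the three-term Pfaffian (`subPf_univ_four`), which expands it in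
the standard basis (`sPf_four`) with the same coefficients. -/

open scoped BigOperators

noncomputable section

/-- Change of basis on an `n`-arity gate: `((A₁⊗…⊗Aₙ)G)(b) = Σ_c (∏ᵢ Aᵢ(bᵢ,cᵢ))·G(c)`. -/
def cobGate {n : ℕ} (A : Fin n → Matrix (Fin 2) (Fin 2) ℂ) (G : (Fin n → Fin 2) → ℂ) :
    (Fin n → Fin 2) → ℂ :=
  fun b => ∑ c : Fin n → Fin 2, (∏ i, A i (b i) (c i)) * G c

/-- Change of basis on an `n`-arity cogate: `C′(b) = Σ_c C(c)·∏ᵢ Aᵢ⁻¹(cᵢ,bᵢ)`. -/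
def cobCogate {n : ℕ} (A : Fin n → Matrix (Fin 2) (Fin 2) ℂ) (C : (Fin n → Fin 2) → ℂ) :
    (Fin n → Fin 2) → ℂ :=
  fun b => ∑ c : Fin n → Fin 2, C c * ∏ i, (A i)⁻¹ (c i) (b i)

/-- The standard basis vector (ket/bra) at the bitstring `v`. -/
def ket {n : ℕ} (v : Fin n → Fin 2) : (Fin n → Fin 2) → ℂ :=
  fun b => if b = v then 1 else 0

/-- The support of a bitstring. -/
def supp {n : ℕ} (b : Fin n → Fin 2) : Finset (Fin n) :=
  Finset.univ.filter fun i => b i = 1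

/-- Fuel-driven Laplace expansion of the Pfaffian of a principal submatrix. -/
def subPfAux {n : ℕ} (Ξ : Matrix (Fin n) (Fin n) ℂ) : ℕ → Finset (Fin n) → ℂ
  | 0, I => if I = ∅ then 1 else 0
  | fuel + 1, I =>
    if hI : I.Nonempty then
      if Odd I.card then 0
      else
        ∑ i ∈ I.erase (I.min' hI),
          (-1 : ℂ) ^ (I.filter fun j => j ≤ i).card * Ξ (I.min' hI) i *
            subPfAux Ξ fuel ((I.erase (I.min' hI)).erase i)
    else 1

/-- `subPf Ξ I` is the Pfaffian `Pf(Ξ|_I)` of the principal submatrix of `Ξ` on the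
rows and columns in `I` (`1` on the empty set, `0` for odd `|I|`). -/
def subPf {n : ℕ} (Ξ : Matrix (Fin n) (Fin n) ℂ) (I : Finset (Fin n)) : ℂ :=
  subPfAux Ξ I.card I

/-- The sub-Pfaffian vector: coordinate `Pf(Ξ|_I)` at the bitstring with support `I`. -/
def sPf {n : ℕ} (Ξ : Matrix (Fin n) (Fin n) ℂ) : (Fin n → Fin 2) → ℂ :=
  fun b => subPf Ξ (supp b)

/-- The dual sub-Pfaffian vector: coordinate `Pf(Θ|_{Jᶜ})` at the bitstring with support `J`. -/
def sPfStar {n : ℕ} (Θ : Matrix (Fin n) (Fin n) ℂ) : (Fin n → Fin 2) → ℂ :=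
  fun b => subPf Θ (supp b)ᶜ

/-- A matrix is skew-symmetric. -/
def IsSkew {n : ℕ} (Ξ : Matrix (Fin n) (Fin n) ℂ) : Prop :=
  ∀ i j, Ξ j i = -Ξ i j

/-- A gate is Pfaffian under the change of basis `M`. -/
def IsPfaffGate {n : ℕ} (M : Fin n → Matrix (Fin 2) (Fin 2) ℂ) (G : (Fin n → Fin 2) → ℂ) : Prop :=
  ∃ (α : ℂ) (Ξ : Matrix (Fin n) (Fin n) ℂ), IsSkew Ξ ∧ cobGate M G = fun b => α * sPf Ξ b

/-- A cogate is Pfaffian under the change of basis `M`. -/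
def IsPfaffCogate {n : ℕ} (M : Fin n → Matrix (Fin 2) (Fin 2) ℂ) (C : (Fin n → Fin 2) → ℂ) : Prop :=
  ∃ (β : ℂ) (Θ : Matrix (Fin n) (Fin n) ℂ), IsSkew Θ ∧ cobCogate M C = fun b => β * sPfStar Θ b

/-- `2^(3/4)` as a complex number. -/
def r34 : ℂ := ((2 : ℝ) ^ ((3 : ℝ)/4) : ℝ)
/-- `2^(1/4)` as a complex number. -/
def r14 : ℂ := ((2 : ℝ) ^ ((1 : ℝ)/4) : ℝ)

def mC : Matrix (Fin 2) (Fin 2) ℂ :=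
  !![-(r34/2), -Complex.I * (r34/2); -Complex.I * (r14/2), -(r14/2)]
def mD : Matrix (Fin 2) (Fin 2) ℂ :=
  !![r34/2, -Complex.I * (r34/2); -Complex.I * (r14/2), r14/2]
def mE : Matrix (Fin 2) (Fin 2) ℂ :=
  !![r34/2, -Complex.I * (r34/2); -Complex.I * (r14/2), r14/2]
def mF : Matrix (Fin 2) (Fin 2) ℂ :=
  !![-(r34/2), -Complex.I * (r34/2); -Complex.I * (r14/2), -(r14/2)]

def xiEq4 : Matrix (Fin 4) (Fin 4) ℂ :=
  !![0, 1/2, 1/2, -(1/2);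
     -(1/2), 0, -(1/2), 1/2;
     -(1/2), 1/2, 0, 1/2;
     1/2, -(1/2), -(1/2), 0]

lemma r14_pow_four : r14 ^ 4 = 2 := by
  unfold r14
  rw [← Complex.ofReal_pow, ← Real.rpow_natCast, ← Real.rpow_mul (by norm_num)]
  norm_num

lemma r34_pow_four : r34 ^ 4 = 8 := by
  unfold r34
  rw [← Complex.ofReal_pow, ← Real.rpow_natCast, ← Real.rpow_mul (by norm_num)]
  norm_num

lemma r34_mul_r14 : r34 * r14 = 2 := by
  unfold r34 r14
  rw [← Complex.ofReal_mul, ← Real.rpow_add (by norm_num)]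
  norm_num

lemma cobGate_equal (A : Fin 4 → Matrix (Fin 2) (Fin 2) ℂ) (b : Fin 4 → Fin 2) :
    cobGate A (ket ![0,0,0,0] + ket ![1,1,1,1]) b =
      (∏ i, A i (b i) 0) + ∏ i, A i (b i) 1 := by
  simp [cobGate, ket, mul_add, Finset.sum_add_distrib, Fin.prod_univ_four]

/-- Laplace expansion along the least index `m`, with `m` named explicitly instead of as a
`min'`. -/
lemma subPfAux_succ {n : ℕ} (Ξ : Matrix (Fin n) (Fin n) ℂ) (k : ℕ) (I : Finset (Fin n))
    (m : Fin n) (hm : m ∈ I) (hle : ∀ j ∈ I, m ≤ j) (heven : ¬ Odd I.card) :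
    subPfAux Ξ (k + 1) I = ∑ i ∈ I.erase m,
      (-1 : ℂ) ^ (I.filter fun j => j ≤ i).card * Ξ m i * subPfAux Ξ k ((I.erase m).erase i) := by
  have hI : I.Nonempty := ⟨m, hm⟩
  have hmin : I.min' hI = m :=
    le_antisymm (I.min'_le m hm) (hle _ (I.min'_mem hI))
  simp only [subPfAux, dif_pos hI, if_neg heven, hmin]

lemma subPfAux_empty {n : ℕ} (Ξ : Matrix (Fin n) (Fin n) ℂ) (k : ℕ) :
    subPfAux Ξ k ∅ = 1 := by
  cases k <;> simp [subPfAux]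

lemma subPf_odd {n : ℕ} (Ξ : Matrix (Fin n) (Fin n) ℂ) {I : Finset (Fin n)}
    (h : Odd I.card) : subPf Ξ I = 0 := by
  obtain ⟨k, hk⟩ := h
  have hI : I.Nonempty := Finset.card_pos.mp (by omega)
  simp [subPf, hk, subPfAux, hI]

/-- Stated for arbitrary fuel `k + 1`, so that it also applies inside a longer Laplace
expansion. -/
lemma subPfAux_pair {n : ℕ} (Ξ : Matrix (Fin n) (Fin n) ℂ) (k : ℕ) {i j : Fin n} (h : i < j) :
    subPfAux Ξ (k + 1) {i, j} = Ξ i j := by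
  have hne : i ∉ ({j} : Finset (Fin n)) := by simpa using h.ne
  have hcard : ({i, j} : Finset (Fin n)).card = 2 := Finset.card_pair h.ne
  have hfilter : ({i, j} : Finset (Fin n)).filter (fun l => l ≤ j) = {i, j} := by
    apply Finset.filter_true_of_mem
    simp [h.le]
  rw [subPfAux_succ Ξ k _ i (by simp) (by simp [h.le]) (by rw [hcard]; decide),
    Finset.erase_insert hne, Finset.sum_singleton, hfilter, hcard]
  simp [subPfAux_empty]

lemma subPf_pair {n : ℕ} (Ξ : Matrix (Fin n) (Fin n) ℂ) {i j : Fin n} (h : i < j) :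
    subPf Ξ {i, j} = Ξ i j := by
  rw [subPf, Finset.card_pair h.ne, subPfAux_pair Ξ 1 h]

lemma subPf_univ_four (Ξ : Matrix (Fin 4) (Fin 4) ℂ) :
    subPf Ξ Finset.univ = Ξ 0 1 * Ξ 2 3 - Ξ 0 2 * Ξ 1 3 + Ξ 0 3 * Ξ 1 2 := by
  have h1 : (({1, 2, 3} : Finset (Fin 4)).erase 1) = {2, 3} := by decide
  have h2 : (({1, 2, 3} : Finset (Fin 4)).erase 2) = {1, 3} := by decide
  have h3 : (({1, 2, 3} : Finset (Fin 4)).erase 3) = {1, 2} := by decide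
  have c1 : ((Finset.univ : Finset (Fin 4)).filter fun j => j ≤ 1).card = 2 := by decide
  have c2 : ((Finset.univ : Finset (Fin 4)).filter fun j => j ≤ 2).card = 3 := by decide
  have c3 : ((Finset.univ : Finset (Fin 4)).filter fun j => j ≤ 3).card = 4 := by decide
  rw [subPf, Finset.card_fin, subPfAux_succ Ξ 3 _ 0 (by simp) (by simp) (by decide),
    show (Finset.univ : Finset (Fin 4)).erase 0 = {1, 2, 3} by decide,
    Finset.sum_insert (by decide), Finset.sum_insert (by decide), Finset.sum_singleton,
    h1, h2, h3, c1, c2, c3, subPfAux_pair Ξ 2 (by decide), subPfAux_pair Ξ 2 (by decide),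
    subPfAux_pair Ξ 2 (by decide)]
  ring

/-- The sub-Pfaffian vector in arity four, as an expansion in the standard basis. -/
lemma sPf_four (Ξ : Matrix (Fin 4) (Fin 4) ℂ) (b : Fin 4 → Fin 2) :
    sPf Ξ b = ket ![0,0,0,0] b + Ξ 0 1 * ket ![1,1,0,0] b
        + Ξ 0 2 * ket ![1,0,1,0] b + Ξ 0 3 * ket ![1,0,0,1] b
        + Ξ 1 2 * ket ![0,1,1,0] b + Ξ 1 3 * ket ![0,1,0,1] b
        + Ξ 2 3 * ket ![0,0,1,1] b
        + (Ξ 0 1 * Ξ 2 3 - Ξ 0 2 * Ξ 1 3 + Ξ 0 3 * Ξ 1 2) * ket ![1,1,1,1] b := by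
  have hempty : subPf Ξ ∅ = 1 := subPfAux_empty Ξ _
  by_cases hodd : Odd (supp b).card
  · have hne : ∀ v : Fin 4 → Fin 2, ¬ Odd (supp v).card → ket v b = 0 := by
      intro v hv
      have : b ≠ v := by rintro rfl; exact hv hodd
      simp [ket, this]
    rw [sPf, subPf_odd Ξ hodd]
    simp only [hne _ (show ¬ Odd (supp ![0,0,0,0]).card by decide),
      hne _ (show ¬ Odd (supp ![1,1,0,0]).card by decide),
      hne _ (show ¬ Odd (supp ![1,0,1,0]).card by decide),
      hne _ (show ¬ Odd (supp ![1,0,0,1]).card by decide),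
      hne _ (show ¬ Odd (supp ![0,1,1,0]).card by decide),
      hne _ (show ¬ Odd (supp ![0,1,0,1]).card by decide),
      hne _ (show ¬ Odd (supp ![0,0,1,1]).card by decide),
      hne _ (show ¬ Odd (supp ![1,1,1,1]).card by decide)]
    ring
  · have hb : b = ![0,0,0,0] ∨ b = ![1,1,0,0] ∨ b = ![1,0,1,0] ∨ b = ![1,0,0,1] ∨
        b = ![0,1,1,0] ∨ b = ![0,1,0,1] ∨ b = ![0,0,1,1] ∨ b = ![1,1,1,1] := by
      revert b
      decide
    rcases hb with rfl | rfl | rfl | rfl | rfl | rfl | rfl | rfl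
    · rw [sPf, show supp ![0,0,0,0] = ∅ by decide, hempty]
      simp [ket]
    · rw [sPf, show supp ![1,1,0,0] = {0, 1} by decide, subPf_pair Ξ (by decide)]
      simp [ket]
    · rw [sPf, show supp ![1,0,1,0] = {0, 2} by decide, subPf_pair Ξ (by decide)]
      simp [ket]
    · rw [sPf, show supp ![1,0,0,1] = {0, 3} by decide, subPf_pair Ξ (by decide)]
      simp [ket]
    · rw [sPf, show supp ![0,1,1,0] = {1, 2} by decide, subPf_pair Ξ (by decide)]
      simp [ket]
    · rw [sPf, show supp ![0,1,0,1] = {1, 3} by decide, subPf_pair Ξ (by decide)]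
      simp [ket]
    · rw [sPf, show supp ![0,0,1,1] = {2, 3} by decide, subPf_pair Ξ (by decide)]
      simp [ket]
    · rw [sPf, show supp ![1,1,1,1] = Finset.univ by decide, subPf_univ_four]
      simp [ket]

lemma cobGate_expansion (b : Fin 4 → Fin 2) :
    cobGate ![mC, mD, mE, mF] (ket ![0,0,0,0] + ket ![1,1,1,1]) b =
      ket ![0,0,0,0] b + (1/2 : ℂ) * ket ![1,1,0,0] b
        + (1/2 : ℂ) * ket ![1,0,1,0] b - (1/2 : ℂ) * ket ![1,0,0,1] b
        - (1/2 : ℂ) * ket ![0,1,1,0] b + (1/2 : ℂ) * ket ![0,1,0,1] b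
        + (1/2 : ℂ) * ket ![0,0,1,1] b + (1/4 : ℂ) * ket ![1,1,1,1] b := by
  have ha := r34_pow_four
  have hc := r14_pow_four
  have hac := r34_mul_r14
  have hI := Complex.I_sq
  rw [cobGate_equal]
  obtain ⟨p, q, r, s, rfl⟩ : ∃ p q r s, b = ![p, q, r, s] :=
    ⟨b 0, b 1, b 2, b 3, by ext i; fin_cases i <;> rfl⟩
  fin_cases p <;> fin_cases q <;> fin_cases r <;> fin_cases s <;>
    simp [Fin.prod_univ_four, mC, mD, mE, mF, ket] <;> grind

/-- Example 6.2: the 4-arity EQUAL gate is Pfaffian under `(C,D,E,F)`. -/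
theorem stmt18 :
    (cobGate ![mC, mD, mE, mF] (ket ![0,0,0,0] + ket ![1,1,1,1]) =
      fun b => ket ![0,0,0,0] b + (1/2 : ℂ) * ket ![1,1,0,0] b
        + (1/2 : ℂ) * ket ![1,0,1,0] b - (1/2 : ℂ) * ket ![1,0,0,1] b
        - (1/2 : ℂ) * ket ![0,1,1,0] b + (1/2 : ℂ) * ket ![0,1,0,1] b
        + (1/2 : ℂ) * ket ![0,0,1,1] b + (1/4 : ℂ) * ket ![1,1,1,1] b) ∧
    cobGate ![mC, mD, mE, mF] (ket ![0,0,0,0] + ket ![1,1,1,1]) =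
      fun b => sPf xiEq4 b := by
  have hleft := funext cobGate_expansion
  refine ⟨hleft, hleft.trans (funext fun b => ?_)⟩
  rw [sPf_four]
  simp [xiEq4]
  ring
end
end

section
/- Let A be the 2×2 complex matrix A = [[(−5^{3/4} + 5^{5/4})/10, 5^{−1/4}], [(−5^{3/4} − 5^{5/4})/10, 5^{−1/4}]]. Then: (i) for the 2-arity OR gate G = |10⟩ + |01⟩ + |11⟩, one has (A⊗A)G = |00⟩ − |11⟩ (so OR is Pfaffian under the homogeneous change of basis A, with (A⊗A)G = sPf([[0,−1],[1,0]])); and (ii) the change of basis of the EQUAL cogate ⟨00| + ⟨11| under (A,A) (i.e. the transform by A⁻¹⊗A⁻¹ via the cogate rule) equals ((√5 − 1)/2)·((√5/2 + 3/2)⟨00| + ⟨11|), so the EQUAL cogate is Pfaffian under A with β = (√5 − 1)/2 and Θ₁₂ = √5/2 + 3/2. -/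
/-! With `r = 5^(1/4)`, so that `r ^ 4 = 5` and `√5 = r ^ 2`, all entries of the matrix are
polynomials in `r` (`exists_fourth_root`) and its determinant is `1`. Each coordinate of the
transformed gate and cogate is then a polynomial identity modulo `r ^ 4 = 5`. The Pfaffian form of
the OR gate follows from the explicit arity-two sub-Pfaffian vector (`sPf_two`). -/

open scoped BigOperators

noncomputable section

def mA : Matrix (Fin 2) (Fin 2) ℂ :=
  !![(((-((5:ℝ) ^ ((3:ℝ)/4)) + (5:ℝ) ^ ((5:ℝ)/4)) / 10 : ℝ) : ℂ),
     (((5:ℝ) ^ (-(1:ℝ)/4) : ℝ) : ℂ);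
     (((-((5:ℝ) ^ ((3:ℝ)/4)) - (5:ℝ) ^ ((5:ℝ)/4)) / 10 : ℝ) : ℂ),
     (((5:ℝ) ^ (-(1:ℝ)/4) : ℝ) : ℂ)]

/-- With `r = 5^(1/4)`, every entry of `mA` is a polynomial in `r`, where `r ^ 4 = 5`. -/
lemma exists_fourth_root : ∃ r : ℂ, r ^ 4 = 5 ∧ ((Real.sqrt 5 : ℝ) : ℂ) = r ^ 2 ∧
    mA = !![(-r ^ 3 + 5 * r) / 10, r ^ 3 / 5; (-r ^ 3 - 5 * r) / 10, r ^ 3 / 5] := by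
  have h0 : (0 : ℝ) < 5 := by norm_num
  have h4 : ((5 : ℝ) ^ ((1 : ℝ) / 4)) ^ 4 = 5 := by
    rw [← Real.rpow_natCast, ← Real.rpow_mul h0.le]; norm_num
  have h3 : (5 : ℝ) ^ ((3 : ℝ) / 4) = ((5 : ℝ) ^ ((1 : ℝ) / 4)) ^ 3 := by
    rw [← Real.rpow_natCast, ← Real.rpow_mul h0.le]; norm_num
  have h5 : (5 : ℝ) ^ ((5 : ℝ) / 4) = 5 * (5 : ℝ) ^ ((1 : ℝ) / 4) := by
    rw [← Real.rpow_one_add' h0.le (by norm_num)]; norm_num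
  have hm : (5 : ℝ) ^ (-(1 : ℝ) / 4) = ((5 : ℝ) ^ ((1 : ℝ) / 4)) ^ 3 / 5 := by
    rw [← h3, ← Real.rpow_sub_one h0.ne']; norm_num
  have hs : Real.sqrt 5 = ((5 : ℝ) ^ ((1 : ℝ) / 4)) ^ 2 := by
    rw [← Real.rpow_natCast, ← Real.rpow_mul h0.le, Real.sqrt_eq_rpow]; norm_num
  refine ⟨(((5 : ℝ) ^ ((1 : ℝ) / 4) : ℝ) : ℂ), ?_, ?_, ?_⟩
  · exact_mod_cast h4
  · rw [hs]; push_cast; rfl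
  · rw [mA, h3, h5, hm]; push_cast; rfl

/-- A vector on two-bit strings is determined by its four coordinates. -/
lemma funext_bits {f g : (Fin 2 → Fin 2) → ℂ} (h : ∀ i j, f ![i, j] = g ![i, j]) : f = g := by
  funext b
  have hb : b = ![b 0, b 1] := by ext i; fin_cases i <;> rfl
  rw [hb]; exact h _ _

lemma sum_bits (f : (Fin 2 → Fin 2) → ℂ) :
    ∑ c, f c = f ![0, 0] + f ![0, 1] + f ![1, 0] + f ![1, 1] := by
  rw [← (finTwoArrowEquiv (Fin 2)).symm.sum_comp, Fintype.sum_prod_type]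
  simp [finTwoArrowEquiv, Fin.sum_univ_two, add_assoc]

lemma ket_bits (i j k l : Fin 2) :
    ket ![i, j] ![k, l] = if k = i ∧ l = j then 1 else 0 := by
  simp [ket]

/-- For arity two, the sub-Pfaffian vector is `|00⟩ + Ξ₁₂|11⟩`. -/
lemma sPf_two (Ξ : Matrix (Fin 2) (Fin 2) ℂ) :
    sPf Ξ = fun b => ket ![0, 0] b + Ξ 0 1 * ket ![1, 1] b := by
  have h00 : supp ![0, 0] = (∅ : Finset (Fin 2)) := by decide
  have h01 : supp ![0, 1] = ({1} : Finset (Fin 2)) := by decide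
  have h10 : supp ![1, 0] = ({0} : Finset (Fin 2)) := by decide
  have h11 : supp ![1, 1] = ({0, 1} : Finset (Fin 2)) := by decide
  have hmin : ∀ h : ({0, 1} : Finset (Fin 2)).Nonempty, Finset.min' {0, 1} h = 0 := by decide
  have he : ({0, 1} : Finset (Fin 2)).erase 0 = {1} := by decide
  have hf : (({0, 1} : Finset (Fin 2)).filter fun j => j ≤ 1).card = 2 := by decide
  refine funext_bits fun i j => ?_
  fin_cases i <;> fin_cases j
  · simp [sPf, h00, subPf, subPfAux, ket_bits]
  · simp [sPf, h01, subPf, subPfAux, ket_bits]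
  · simp [sPf, h10, subPf, subPfAux, ket_bits]
  · simp [sPf, h11, subPf, subPfAux, ket_bits, hmin, he, hf]

lemma cobGate_or : cobGate ![mA, mA] (ket ![1, 0] + ket ![0, 1] + ket ![1, 1]) =
    fun b => ket ![0, 0] b - ket ![1, 1] b := by
  obtain ⟨r, hr, -, hA⟩ := exists_fourth_root
  refine funext_bits fun i j => ?_
  simp only [cobGate, sum_bits, Pi.add_apply, ket_bits, hA]
  fin_cases i <;> fin_cases j <;> simp [Fin.prod_univ_two]
  · linear_combination (1 / 5) * hr
  · ring
  · ring
  · linear_combination (-1 / 5) * hr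

lemma cobCogate_equal : cobCogate ![mA, mA] (ket ![0, 0] + ket ![1, 1]) =
    fun b => (((Real.sqrt 5 - 1) / 2 : ℝ) : ℂ) *
      ((((Real.sqrt 5 / 2 + 3 / 2 : ℝ)) : ℂ) * ket ![0, 0] b + ket ![1, 1] b) := by
  obtain ⟨r, hr, hs, hA⟩ := exists_fourth_root
  -- `mA` has determinant `r ^ 4 / 5 = 1`, so its inverse is its adjugate.
  have hinv : mA⁻¹ = !![r ^ 3 / 5, -(r ^ 3 / 5); -((-r ^ 3 - 5 * r) / 10),
      (-r ^ 3 + 5 * r) / 10] := by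
    have hdet : mA.det = 1 := by
      rw [hA, Matrix.det_fin_two_of]
      linear_combination (1 / 5) * hr
    rw [Matrix.inv_def, hdet, hA, Matrix.adjugate_fin_two_of]
    simp
  refine funext_bits fun i j => ?_
  simp only [cobCogate, sum_bits, Pi.add_apply, ket_bits]
  fin_cases i <;> fin_cases j <;> simp [Fin.prod_univ_two, hinv, hs]
  · linear_combination (r ^ 2 / 20 - 3 / 20) * hr
  · linear_combination (-r ^ 2 / 20) * hr
  · linear_combination (-r ^ 2 / 20) * hr
  · linear_combination (r ^ 2 / 20 - 1 / 10) * hr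

/-- Example 1.3: Pfaffian certificates for the OR gate and the EQUAL
cogate under the homogeneous change of basis `A`. -/
theorem stmt19 :
    -- (i)
    (cobGate ![mA, mA] (ket ![1, 0] + ket ![0, 1] + ket ![1, 1]) =
      fun b => ket ![0, 0] b - ket ![1, 1] b) ∧
    (cobGate ![mA, mA] (ket ![1, 0] + ket ![0, 1] + ket ![1, 1]) =
      fun b => sPf !![0, -1; 1, 0] b) ∧
    -- (ii)
    (cobCogate ![mA, mA] (ket ![0, 0] + ket ![1, 1]) =
      fun b => (((Real.sqrt 5 - 1) / 2 : ℝ) : ℂ) *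
        ((((Real.sqrt 5 / 2 + 3 / 2 : ℝ)) : ℂ) * ket ![0, 0] b + ket ![1, 1] b)) := by
  refine ⟨cobGate_or, ?_, cobCogate_equal⟩
  rw [cobGate_or, sPf_two]
  funext b
  simp [sub_eq_add_neg]
end
end
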